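/- arXiv:1503.06390 — 2 statements merged into one kernel-verified Lean document; each statement's English description precedes it below -/
import Mathlib

section
/- Let B be a unital C*-algebra, let (ωₙ) be a sequence in B such that each Im ωₙ is strictly positive, ‖Im ωₙ‖ → 0, and ‖Re ωₙ − ω₀‖ → 0 for a selfadjoint element ω₀ ∈ B, and let ℓ ∈ B be selfadjoint such that φ(Im ωₙ)/‖Im ωₙ‖ → φ(ℓ) for every state φ on B. If x ∈ B has strictly positive imaginary part and for every n there exists k ≥ n with (x − ω_k)*(Im x)⁻¹(x − ω_k) ≤ Im ω_k/‖Im ω_k‖, then (Re x − ω₀)(Im x)⁻¹(Re x − ω₀) + Im x ≤ ℓ. -/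
noncomputable section

open Filter Topology
open scoped ComplexOrder

/-- The real part `(b + b*)/2` of an element of a complex star algebra. -/
def reP {A : Type*} [NonUnitalRing A] [StarRing A] [Module ℂ A] (b : A) : A :=
  (2 : ℂ)⁻¹ • (b + star b)

/-- The imaginary part `(b - b*)/(2i)` of an element of a complex star algebra. -/
def imP {A : Type*} [NonUnitalRing A] [StarRing A] [Module ℂ A] (b : A) : A :=
  (2 * Complex.I)⁻¹ • (b - star b)

/-- An element of a C*-algebra is strictly positive if it is selfadjoint, positive
(with respect to the canonical order coming from the star-ordered ring structure)
and invertible. -/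
def SPos {A : Type*} [Ring A] [StarRing A] [PartialOrder A] (v : A) : Prop :=
  IsSelfAdjoint v ∧ 0 ≤ v ∧ IsUnit v

/-!
Since `Im ωₙ → 0`, the elements `ωₙ` converge in norm to the selfadjoint `ω₀`, so the left-hand
sides `(x - ω_k)* (Im x)⁻¹ (x - ω_k)` converge in norm to
`(x - ω₀)* (Im x)⁻¹ (x - ω₀) = (Re x - ω₀) (Im x)⁻¹ (Re x - ω₀) + Im x`, where the cross terms
`± i (Re x - ω₀)` cancel. The right-hand sides converge only after applying a state, which suffices
because states determine the order: a selfadjoint element outside the closed convex cone of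
positive elements is separated from it by a real functional, which normalizes to a state.
-/

section RealImaginaryPart

open scoped ComplexStarModule

variable {A : Type*} [NonUnitalRing A] [StarRing A] [Module ℂ A] [StarModule ℂ A]

lemma reP_eq_realPart (b : A) : reP b = ℜ b := by
  rw [reP, realPart_apply_coe, ← Complex.coe_smul, Complex.ofReal_inv, Complex.ofReal_ofNat]

lemma imP_eq_imaginaryPart (b : A) : imP b = ℑ b := by
  rw [imP, imaginaryPart_apply_coe, ← Complex.coe_smul, smul_smul, mul_inv_rev, Complex.inv_I,
    Complex.ofReal_inv, Complex.ofReal_ofNat]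

lemma reP_add_I_smul_imP (b : A) : reP b + Complex.I • imP b = b := by
  rw [reP_eq_realPart, imP_eq_imaginaryPart, realPart_add_I_smul_imaginaryPart]

lemma tendsto_of_tendsto_reP_of_tendsto_imP [TopologicalSpace A] [ContinuousAdd A]
    [ContinuousConstSMul ℂ A] {ι : Type*} {F : Filter ι} {ω : ι → A} {a b : A}
    (hre : Tendsto (fun i => reP (ω i)) F (𝓝 a)) (him : Tendsto (fun i => imP (ω i)) F (𝓝 b)) :
    Tendsto ω F (𝓝 (a + Complex.I • b)) := by
  simpa only [reP_add_I_smul_imP] using hre.add (him.const_smul Complex.I)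

end RealImaginaryPart

section HorodiscForm

open scoped ComplexStarModule

variable {A : Type*} [Ring A] [StarRing A] [Algebra ℂ A] [StarModule ℂ A]

lemma star_add_I_smul_mul_inverse_mul_self {a y : A} (ha : IsSelfAdjoint a)
    (hy : IsSelfAdjoint y) (hu : IsUnit y) :
    star (a + Complex.I • y) * Ring.inverse y * (a + Complex.I • y) =
      a * Ring.inverse y * a + y := by
  have hstar : star (a + Complex.I • y) = a - Complex.I • y := by
    rw [star_add, star_smul, ha.star_eq, hy.star_eq, Complex.star_def, Complex.conj_I, neg_smul,
      sub_eq_add_neg]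
  calc star (a + Complex.I • y) * Ring.inverse y * (a + Complex.I • y)
      = (a * Ring.inverse y - Complex.I • 1) * (a + Complex.I • y) := by
        rw [hstar, sub_mul, smul_mul_assoc, Ring.mul_inverse_cancel y hu]
    _ = a * Ring.inverse y * a + Complex.I • (a * (Ring.inverse y * y)) - Complex.I • a
          - (Complex.I * Complex.I) • y := by
        simp only [sub_mul, mul_add, mul_smul_comm, smul_mul_assoc, one_mul, mul_assoc, smul_sub,
          smul_smul]
        abel
    _ = a * Ring.inverse y * a + y := by
        rw [Ring.inverse_mul_cancel y hu, mul_one, Complex.I_mul_I, neg_one_smul]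
        abel

lemma star_sub_mul_inverse_imP_mul_sub {x ω : A} (hω : IsSelfAdjoint ω) (hx : IsUnit (imP x)) :
    star (x - ω) * Ring.inverse (imP x) * (x - ω) =
      (reP x - ω) * Ring.inverse (imP x) * (reP x - ω) + imP x := by
  have hre : IsSelfAdjoint (reP x - ω) := by
    rw [reP_eq_realPart]
    exact (ℜ x).2.sub hω
  have him : IsSelfAdjoint (imP x) := by
    rw [imP_eq_imaginaryPart]
    exact (ℑ x).2
  rw [← star_add_I_smul_mul_inverse_mul_self hre him hx, sub_add_eq_add_sub,
    reP_add_I_smul_imP]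

end HorodiscForm

section SelfAdjointExtension

open scoped ComplexStarModule

variable {A : Type*} [NormedAddCommGroup A] [NormedSpace ℂ A] [StarAddMonoid A] [StarModule ℂ A]
  [ContinuousStar A]

/-- The complex-linear extension `a ↦ f (ℜ a) + i f (ℑ a)` of the restriction of a real functional
to the selfadjoint part. It turns a real functional from a separation theorem into a complex one
with the same values on positive elements. -/
def selfAdjointExtension (f : StrongDual ℝ A) : A →L[ℂ] ℂ :=
  StrongDual.extendRCLike
    (f.comp ((selfAdjoint.submodule ℝ A).subtypeL.comp (selfAdjointPartL ℝ A)))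

lemma selfAdjointExtension_apply (f : StrongDual ℝ A) (a : A) :
    selfAdjointExtension f a = f (ℜ a) + Complex.I * f (ℑ a) := by
  have h : selfAdjointExtension f a = f (ℜ a) - Complex.I * f (ℜ (Complex.I • a)) := rfl
  simp [h, realPart_I_smul]

lemma selfAdjointExtension_apply_of_isSelfAdjoint (f : StrongDual ℝ A) {a : A}
    (ha : IsSelfAdjoint a) : selfAdjointExtension f a = f a := by
  simp [selfAdjointExtension_apply, ha.coe_realPart, ha.imaginaryPart]

end SelfAdjointExtension

section States

open scoped ComplexStarModule

variable {B : Type*} [CStarAlgebra B] [PartialOrder B]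

/-- A state on a unital C*-algebra: a positive linear functional with value `1` at `1`. States are
taken among the continuous functionals, which loses nothing since positivity implies continuity. -/
structure IsState (φ : B →L[ℂ] ℂ) : Prop where
  map_nonneg : ∀ a : B, 0 ≤ a → 0 ≤ φ a
  map_one : φ 1 = 1

variable [StarOrderedRing B]

lemma IsState.mono {φ : B →L[ℂ] ℂ} (hφ : IsState φ) {a b : B} (hab : a ≤ b) : φ a ≤ φ b := by
  simpa only [map_sub, sub_nonneg] using hφ.map_nonneg (b - a) (sub_nonneg.2 hab)

lemma IsState.map_imaginaryPart {φ : B →L[ℂ] ℂ} (hφ : IsState φ) (a : B) : φ (ℑ a) = ℑ (φ a) :=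
  _root_.map_imaginaryPart (PositiveLinearMap.mk₀ φ.toLinearMap hφ.map_nonneg) a

lemma map_one_pos_of_apply_neg {f : B →ₗ[ℝ] ℝ} (hf : ∀ a, 0 ≤ a → 0 ≤ f a) {d : B}
    (hd : IsSelfAdjoint d) (hfd : f d < 0) : 0 < f 1 := by
  have h : 0 ≤ f (d + ‖d‖ • 1) := hf _ <| by
    rw [← Algebra.algebraMap_eq_smul_one]
    exact neg_le_iff_add_nonneg.1 hd.neg_algebraMap_norm_le_self
  rw [map_add, map_smul, smul_eq_mul] at h
  exact pos_of_mul_pos_right (by linarith) (norm_nonneg d)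

lemma exists_isState_apply_neg {d : B} (hd : IsSelfAdjoint d) (hneg : ¬ 0 ≤ d) :
    ∃ φ : B →L[ℂ] ℂ, IsState φ ∧ φ d < 0 := by
  obtain ⟨f, hf, hfd⟩ := (ProperCone.positive ℝ B).hyperplane_separation_point (x₀ := d) hneg
  have hf1 : 0 < f 1 := map_one_pos_of_apply_neg (f := f.toLinearMap) hf hd hfd
  have hsa {a : B} (ha : IsSelfAdjoint a) :
      selfAdjointExtension ((f 1)⁻¹ • f) a = (((f 1)⁻¹ * f a : ℝ) : ℂ) :=
    selfAdjointExtension_apply_of_isSelfAdjoint _ ha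
  refine ⟨selfAdjointExtension ((f 1)⁻¹ • f), ⟨fun a ha => ?_, ?_⟩, ?_⟩
  · rw [hsa (.of_nonneg ha), Complex.zero_le_real]
    exact mul_nonneg (inv_nonneg.2 hf1.le) (hf a ha)
  · rw [hsa (.one B), inv_mul_cancel₀ hf1.ne', Complex.ofReal_one]
  · rw [hsa hd, ← Complex.ofReal_zero, Complex.real_lt_real]
    exact mul_neg_of_pos_of_neg (inv_pos.2 hf1) hfd

lemma nonneg_of_isSelfAdjoint_of_forall_isState {d : B} (hd : IsSelfAdjoint d)
    (h : ∀ φ : B →L[ℂ] ℂ, IsState φ → 0 ≤ φ d) : 0 ≤ d := by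
  by_contra hneg
  obtain ⟨φ, hφ, hφd⟩ := exists_isState_apply_neg hd hneg
  exact hφd.not_ge (h φ hφ)

lemma nonneg_of_forall_isState {d : B} (h : ∀ φ : B →L[ℂ] ℂ, IsState φ → 0 ≤ φ d) : 0 ≤ d := by
  have him (φ : B →L[ℂ] ℂ) (hφ : IsState φ) : φ (ℑ d) = 0 := by
    rw [hφ.map_imaginaryPart, (nonneg_iff_realPart_imaginaryPart.1 (h φ hφ)).2,
      ZeroMemClass.coe_zero]
  have hd : (ℑ d : B) = 0 := by
    refine le_antisymm (neg_nonneg.1 ?_) ?_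
    · refine nonneg_of_isSelfAdjoint_of_forall_isState (ℑ d).2.neg fun φ hφ => ?_
      rw [map_neg, him φ hφ, neg_zero]
    · exact nonneg_of_isSelfAdjoint_of_forall_isState (ℑ d).2 fun φ hφ => (him φ hφ).ge
  have hsa : IsSelfAdjoint d := imaginaryPart_eq_zero_iff.1 (Subtype.ext hd)
  exact nonneg_of_isSelfAdjoint_of_forall_isState hsa h

lemma le_iff_forall_isState {a b : B} :
    a ≤ b ↔ ∀ φ : B →L[ℂ] ℂ, IsState φ → φ a ≤ φ b := by
  refine ⟨fun hab φ hφ => hφ.mono hab, fun h => sub_nonneg.1 <| nonneg_of_forall_isState ?_⟩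
  intro φ hφ
  rw [map_sub, sub_nonneg]
  exact h φ hφ

lemma le_of_forall_isState_tendsto_of_frequently_le {ι : Type*} {F : Filter ι} {u v : ι → B}
    {a b : B}
    (hu : ∀ φ : B →L[ℂ] ℂ, IsState φ → Tendsto (fun i => φ (u i)) F (𝓝 (φ a)))
    (hv : ∀ φ : B →L[ℂ] ℂ, IsState φ → Tendsto (fun i => φ (v i)) F (𝓝 (φ b)))
    (huv : ∃ᶠ i in F, u i ≤ v i) : a ≤ b :=
  le_iff_forall_isState.2 fun φ hφ =>
    le_of_tendsto_of_tendsto_of_frequently (hu φ hφ) (hv φ hφ) (huv.mono fun _ h => hφ.mono h)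

end States

theorem closed_horodisc_limsup_inclusion_general
    {B : Type*} [CStarAlgebra B] [PartialOrder B] [StarOrderedRing B]
    {ι : Type*} {F : Filter ι} {ω v : ι → B} {ω₀ ℓ x : B}
    (hω : Tendsto ω F (𝓝 ω₀)) (hω₀ : IsSelfAdjoint ω₀)
    (hweak : ∀ φ : B →L[ℂ] ℂ, IsState φ → Tendsto (fun i => φ (v i)) F (𝓝 (φ ℓ)))
    (hx : IsUnit (imP x))
    (hmem : ∃ᶠ i in F, star (x - ω i) * Ring.inverse (imP x) * (x - ω i) ≤ v i) :
    (reP x - ω₀) * Ring.inverse (imP x) * (reP x - ω₀) + imP x ≤ ℓ := by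
  rw [← star_sub_mul_inverse_imP_mul_sub hω₀ hx]
  have hsub : Tendsto (fun i => x - ω i) F (𝓝 (x - ω₀)) := hω.const_sub x
  have hform := (hsub.star.mul_const (Ring.inverse (imP x))).mul hsub
  exact le_of_forall_isState_tendsto_of_frequently_le
    (fun φ _ => (φ.continuous.tendsto _).comp hform) hweak hmem

/-- limsup horodisc inclusion: if `ωₙ` have strictly positive imaginary
parts with `‖Im ωₙ‖ → 0` and `Re ωₙ → ω₀` in norm, and the normalized imaginary parts
converge to a selfadjoint `ℓ` weakly (tested against all states of `B`), then any `x`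
with strictly positive imaginary part which lies in infinitely many of the closed sets
`B⁺₁(ω_k, ‖Im ω_k‖^{-1/2})` belongs to the closed horodisc, i.e. satisfies
`(Re x − ω₀)(Im x)⁻¹(Re x − ω₀) + Im x ≤ ℓ`. -/
theorem closed_horodisc_limsup_inclusion
    {B : Type*} [CStarAlgebra B] [PartialOrder B] [StarOrderedRing B]
    (ωs : ℕ → B) (hIm : ∀ n, SPos (imP (ωs n)))
    (hnorm : Tendsto (fun n => ‖imP (ωs n)‖) atTop (𝓝 0))
    (ω₀ : B) (hω₀ : IsSelfAdjoint ω₀)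
    (hre : Tendsto (fun n => reP (ωs n)) atTop (𝓝 ω₀))
    (ℓ : B) (hℓ : IsSelfAdjoint ℓ)
    (hweak : ∀ φ : B →L[ℂ] ℂ, (∀ a : B, 0 ≤ a → 0 ≤ φ a) → φ 1 = 1 →
      Tendsto (fun n => φ (imP (ωs n)) / (‖imP (ωs n)‖ : ℂ)) atTop (𝓝 (φ ℓ)))
    (x : B) (hx : SPos (imP x))
    (hmem : ∀ n : ℕ, ∃ k ≥ n,
      star (x - ωs k) * Ring.inverse (imP x) * (x - ωs k) ≤ ‖imP (ωs k)‖⁻¹ • imP (ωs k)) :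
    (reP x - ω₀) * Ring.inverse (imP x) * (reP x - ω₀) + imP x ≤ ℓ := by
  have hω : Tendsto ωs atTop (𝓝 ω₀) := by
    simpa only [smul_zero, add_zero] using
      tendsto_of_tendsto_reP_of_tendsto_imP hre (tendsto_zero_iff_norm_tendsto_zero.2 hnorm)
  refine closed_horodisc_limsup_inclusion_general hω hω₀ (fun φ hφ => ?_) hx.2.2
    (frequently_atTop.2 hmem)
  simpa only [φ.map_smul_of_tower, Complex.real_smul, Complex.ofReal_inv, ← div_eq_inv_mul] using
    hweak φ hφ.map_nonneg hφ.map_one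
end
end

section
/- Let B be a unital C*-algebra, let v ∈ B be strictly positive, and let ε ∈ B be selfadjoint. Then v + ε v⁻¹ ε is strictly positive, v + iε is invertible, and (v + iε)⁻¹ = (v + ε v⁻¹ ε)⁻¹ − i (v + ε v⁻¹ ε)⁻¹ ε v⁻¹. -/
noncomputable section

open Filter Topology
open scoped ComplexOrder

/-!
Put `x = iε`. Since `x v⁻¹ v = x = v v⁻¹ x`, the cross terms cancel in both products
`(v - x) v⁻¹ (v + x)` and `(v + x) v⁻¹ (v - x)`, which therefore equal
`w := v - x v⁻¹ x = v + ε v⁻¹ ε`. As `w ≥ v`, it is strictly positive, so `v + x` has a left and a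
right inverse, the left one being `w⁻¹ (v - x) v⁻¹ = w⁻¹ - w⁻¹ x v⁻¹`.
-/

section Ring

open scoped Ring

variable {R : Type*} [Ring R] {v x : R}

theorem add_mul_inverse_mul_sub (hv : IsUnit v) (x : R) :
    (v + x) * v⁻¹ʳ * (v - x) = v - x * v⁻¹ʳ * x := by
  rw [add_mul, Ring.mul_inverse_cancel v hv, add_mul, one_mul, mul_sub,
    Ring.inverse_mul_cancel_right v x hv, sub_add_sub_cancel]

theorem sub_mul_inverse_mul_add (hv : IsUnit v) (x : R) :
    (v - x) * v⁻¹ʳ * (v + x) = v - x * v⁻¹ʳ * x := by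
  simpa [sub_eq_add_neg] using add_mul_inverse_mul_sub hv (-x)

theorem isUnit_add_of_isUnit_sub_mul_inverse_mul (hv : IsUnit v)
    (hw : IsUnit (v - x * v⁻¹ʳ * x)) : IsUnit (v + x) := by
  rw [isUnit_iff_exists_and_exists]
  constructor
  · refine ⟨v⁻¹ʳ * (v - x) * (v - x * v⁻¹ʳ * x)⁻¹ʳ, ?_⟩
    rw [← mul_assoc, ← mul_assoc, add_mul_inverse_mul_sub hv, Ring.mul_inverse_cancel _ hw]
  · refine ⟨(v - x * v⁻¹ʳ * x)⁻¹ʳ * ((v - x) * v⁻¹ʳ), ?_⟩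
    rw [mul_assoc, sub_mul_inverse_mul_add hv, Ring.inverse_mul_cancel _ hw]

theorem inverse_add_eq_inverse_sub_mul_inverse_mul (hv : IsUnit v)
    (hw : IsUnit (v - x * v⁻¹ʳ * x)) :
    (v + x)⁻¹ʳ = (v - x * v⁻¹ʳ * x)⁻¹ʳ - (v - x * v⁻¹ʳ * x)⁻¹ʳ * x * v⁻¹ʳ := by
  have hvx : IsUnit (v + x) := isUnit_add_of_isUnit_sub_mul_inverse_mul hv hw
  calc (v + x)⁻¹ʳ
    _ = (v - x * v⁻¹ʳ * x)⁻¹ʳ * ((v - x) * v⁻¹ʳ * (v + x)) * (v + x)⁻¹ʳ := by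
      rw [sub_mul_inverse_mul_add hv, Ring.inverse_mul_cancel _ hw, one_mul]
    _ = (v - x * v⁻¹ʳ * x)⁻¹ʳ * ((v - x) * v⁻¹ʳ) := by
      rw [← mul_assoc, Ring.mul_inverse_cancel_right _ _ hvx]
    _ = (v - x * v⁻¹ʳ * x)⁻¹ʳ - (v - x * v⁻¹ʳ * x)⁻¹ʳ * x * v⁻¹ʳ := by
      rw [sub_mul, Ring.mul_inverse_cancel v hv, mul_sub, mul_one, mul_assoc _ x]

end Ring

theorem I_smul_mul_mul_I_smul {A : Type*} [NonUnitalNonAssocRing A] [Module ℂ A]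
    [IsScalarTower ℂ A A] [SMulCommClass ℂ A A] (a b c : A) :
    (Complex.I • a) * b * (Complex.I • c) = -(a * b * c) := by
  rw [smul_mul_assoc, smul_mul_assoc, mul_smul_comm, smul_smul, Complex.I_mul_I, neg_one_smul]

theorem sPos_iff_isStrictlyPositive {A : Type*} [Ring A] [StarRing A] [PartialOrder A]
    [StarOrderedRing A] {a : A} : SPos a ↔ IsStrictlyPositive a :=
  ⟨fun ⟨_, h_nonneg, h_unit⟩ ↦ h_unit.isStrictlyPositive h_nonneg,
    fun h ↦ ⟨h.isSelfAdjoint, h.nonneg, h.isUnit⟩⟩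

theorem isStrictlyPositive_add_star_mul_inverse_mul {A : Type*} [CStarAlgebra A] [PartialOrder A]
    [StarOrderedRing A] {v : A} (hv : IsStrictlyPositive v) (x : A) :
    IsStrictlyPositive (v + star x * Ring.inverse v * x) :=
  hv.add_nonneg (star_left_conjugate_nonneg hv.ringInverse.nonneg x)

/-- for `v` strictly positive and `ε` selfadjoint, `v + εv⁻¹ε` is strictly
positive, `v + iε` is invertible, and
`(v + iε)⁻¹ = (v + εv⁻¹ε)⁻¹ − i (v + εv⁻¹ε)⁻¹ ε v⁻¹`. -/
theorem inverse_with_selfadjoint_imaginary_part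
    {B : Type*} [CStarAlgebra B] [PartialOrder B] [StarOrderedRing B]
    (v ε : B) (hv : SPos v) (hε : IsSelfAdjoint ε) :
    SPos (v + ε * Ring.inverse v * ε) ∧
    IsUnit (v + Complex.I • ε) ∧
    Ring.inverse (v + Complex.I • ε) =
      Ring.inverse (v + ε * Ring.inverse v * ε) -
        Complex.I • (Ring.inverse (v + ε * Ring.inverse v * ε) * ε * Ring.inverse v) := by
  rw [sPos_iff_isStrictlyPositive] at hv ⊢
  have hw : IsStrictlyPositive (v + ε * Ring.inverse v * ε) := by
    simpa only [hε.star_eq] using isStrictlyPositive_add_star_mul_inverse_mul hv ε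
  have hw_eq : v - (Complex.I • ε) * Ring.inverse v * (Complex.I • ε) =
      v + ε * Ring.inverse v * ε := by
    rw [I_smul_mul_mul_I_smul, sub_neg_eq_add]
  have hw_unit : IsUnit (v - (Complex.I • ε) * Ring.inverse v * (Complex.I • ε)) :=
    hw_eq ▸ hw.isUnit
  refine ⟨hw, isUnit_add_of_isUnit_sub_mul_inverse_mul hv.isUnit hw_unit, ?_⟩
  rw [inverse_add_eq_inverse_sub_mul_inverse_mul hv.isUnit hw_unit, hw_eq, mul_smul_comm,
    smul_mul_assoc]
end
end
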